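/- arXiv:2502.00172 — 2 statements merged into one kernel-verified Lean document; each statement's English description precedes it below -/
import Mathlib

section
/- Let S*, S₁ ⊆ ℝ^d be measurable sets with P_{(x,y)∼D}[x ∈ S*] > 0 and P_{(x,y)∼D}[x ∈ S₁] > 0, and let ε > 0. If |P_{(x,y)∼D}[x ∈ S₁] − P_{(x,y)∼D}[x ∈ S*]| ≤ ε and err_{D|S₁}(S₁) ≤ err_{D|S*}(S*) + ε, then err_D(S₁) ≤ err_D(S*) + 5ε. -/
/-!
Let `Y` be the event `y = 1` and identify a set `S` with the event `x ∈ S`. Then `y = 1[x ∈ S]` is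
the event `(Y ∆ S)ᶜ`, so `err(S) = P[Yᶜ] - P[S] + 2 P[S ∩ Y]`. The conditional loss of `S` on itself
is `P[Y | S]`, and `P[S ∩ Y] = P[Y | S] P[S]`. With `c = P[Y | S*]`, the loss of `S₁` therefore
exceeds that of `S*` by at most `(2c - 1) (P[S₁] - P[S*]) + 2 ε P[S₁] ≤ ε + 2 ε`, since
`|2c - 1| ≤ 1`.
-/

open MeasureTheory

/-- Classification loss `err_D(S) = P_{(x,y)∼D}[y = 1[x ∈ S]]`. -/
noncomputable def errD {d : ℕ} (μ : Measure (EuclideanSpace ℝ (Fin d) × ℝ))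
    (S : Set (EuclideanSpace ℝ (Fin d))) : ℝ :=
  (μ {p | p.2 = S.indicator (fun _ => (1 : ℝ)) p.1}).toReal

/-- Conditional classification loss `err_{D|T}(S) = P_{(x,y)∼D}[y = 1[x ∈ S] | x ∈ T]`. -/
noncomputable def errCond {d : ℕ} (μ : Measure (EuclideanSpace ℝ (Fin d) × ℝ))
    (T S : Set (EuclideanSpace ℝ (Fin d))) : ℝ :=
  (μ {p | p.2 = S.indicator (fun _ => (1 : ℝ)) p.1 ∧ p.1 ∈ T}).toReal /
    (μ {p | p.1 ∈ T}).toReal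

open ProbabilityTheory
open scoped symmDiff

section Events

variable {Ω : Type*} [MeasurableSpace Ω] {μ : Measure Ω} {Y S T : Set Ω}

lemma measureReal_compl_symmDiff [IsFiniteMeasure μ] (hY : MeasurableSet Y)
    (hS : MeasurableSet S) :
    μ.real (Y ∆ S)ᶜ = μ.real Yᶜ - μ.real S + 2 * μ.real (S ∩ Y) := by
  have agree_inter : (Y ∆ S)ᶜ ∩ S = S ∩ Y := by
    ext; simp only [Set.mem_inter_iff, Set.mem_compl_iff, Set.mem_symmDiff]; tauto
  have agree_sdiff : (Y ∆ S)ᶜ \ S = Yᶜ \ S := by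
    ext; simp only [Set.mem_sdiff, Set.mem_compl_iff, Set.mem_symmDiff]; tauto
  have inter_compl : Yᶜ ∩ S = S \ Y := by
    rw [Set.inter_comm, Set.sdiff_eq]
  have agree_split := measureReal_inter_add_sdiff (μ := μ) (s := (Y ∆ S)ᶜ) hS
  have compl_split := measureReal_inter_add_sdiff (μ := μ) (s := Yᶜ) hS
  have mem_split := measureReal_inter_add_sdiff (μ := μ) (s := S) hY
  rw [agree_inter, agree_sdiff] at agree_split
  rw [inter_compl] at compl_split
  linarith

lemma measureReal_cond_eq_div (hS : MeasurableSet S) (Y : Set Ω) :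
    μ[|S].real Y = μ.real (S ∩ Y) / μ.real S := by
  simp only [measureReal_def, cond_apply hS, ENNReal.toReal_mul, ENNReal.toReal_inv,
    div_eq_inv_mul]

theorem stmt13_general [IsProbabilityMeasure μ] (hY : MeasurableSet Y) (hS : MeasurableSet S)
    (hT : MeasurableSet T) (hS₀ : 0 < μ.real S) (hT₀ : 0 < μ.real T) {ε : ℝ}
    (hclose : |μ.real T - μ.real S| ≤ ε) (hcond : μ[|T].real Y ≤ μ[|S].real Y + ε) :
    μ.real (Y ∆ T)ᶜ ≤ μ.real (Y ∆ S)ᶜ + 3 * ε := by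
  have inter_S : μ.real (S ∩ Y) = μ[|S].real Y * μ.real S :=
    (div_eq_iff hS₀.ne').mp (measureReal_cond_eq_div hS Y).symm
  have inter_T : μ.real (T ∩ Y) = μ[|T].real Y * μ.real T :=
    (div_eq_iff hT₀.ne').mp (measureReal_cond_eq_div hT Y).symm
  rw [measureReal_compl_symmDiff hY hT, measureReal_compl_symmDiff hY hS, inter_T, inter_S]
  set c := μ[|S].real Y
  have hc : |2 * c - 1| ≤ 1 := by
    have hc₀ : 0 ≤ c := measureReal_nonneg
    have hc₁ : c ≤ 1 := measureReal_le_one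
    exact abs_le.mpr ⟨by linarith, by linarith⟩
  have size_term : (2 * c - 1) * (μ.real T - μ.real S) ≤ ε :=
    calc (2 * c - 1) * (μ.real T - μ.real S)
        ≤ |2 * c - 1| * |μ.real T - μ.real S| := (le_abs_self _).trans (abs_mul _ _).le
      _ ≤ |μ.real T - μ.real S| := mul_le_of_le_one_left (abs_nonneg _) hc
      _ ≤ ε := hclose
  have cond_term : μ[|T].real Y * μ.real T ≤ c * μ.real T + ε :=
    calc μ[|T].real Y * μ.real T
        ≤ (c + ε) * μ.real T := by gcongr
      _ = c * μ.real T + ε * μ.real T := add_mul _ _ _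
      _ ≤ c * μ.real T + ε := by
        gcongr
        exact mul_le_of_le_one_right ((abs_nonneg _).trans hclose) measureReal_le_one
  linarith

end Events

section Labels

variable {d : ℕ} {μ : Measure (EuclideanSpace ℝ (Fin d) × ℝ)} {S : Set (EuclideanSpace ℝ (Fin d))}

lemma errD_eq_measureReal_compl_symmDiff (hlab : ∀ᵐ p ∂μ, p.2 = 0 ∨ p.2 = 1) :
    errD μ S = μ.real ({p | p.2 = 1} ∆ {p | p.1 ∈ S})ᶜ := by
  refine measureReal_congr (Filter.eventuallyEq_set.mpr ?_)
  filter_upwards [hlab] with p hp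
  by_cases hpS : p.1 ∈ S <;> rcases hp with hp | hp <;> simp [hpS, hp]

lemma errCond_self_eq_cond (hS : MeasurableSet S) :
    errCond μ S S = μ[|{p | p.1 ∈ S}].real {p | p.2 = 1} := by
  have loss_event : {p : EuclideanSpace ℝ (Fin d) × ℝ |
      p.2 = S.indicator (fun _ => (1 : ℝ)) p.1 ∧ p.1 ∈ S} =
        {p | p.1 ∈ S} ∩ {p | p.2 = 1} := by
    ext p
    by_cases hp : p.1 ∈ S <;> simp [hp]
  rw [errCond, loss_event]
  exact (measureReal_cond_eq_div (measurable_fst hS) _).symm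

end Labels

/-- additive reduction: if `|P[x ∈ S₁] − P[x ∈ S*]| ≤ ε` and
`err_{D|S₁}(S₁) ≤ err_{D|S*}(S*) + ε` then `err_D(S₁) ≤ err_D(S*) + 5ε`. -/
theorem stmt13 (d : ℕ)
    (μ : Measure (EuclideanSpace ℝ (Fin d) × ℝ)) [IsProbabilityMeasure μ]
    (hlab : ∀ᵐ p ∂μ, p.2 = 0 ∨ p.2 = 1)
    (Sstar S₁ : Set (EuclideanSpace ℝ (Fin d)))
    (hSstar : MeasurableSet Sstar) (hS₁ : MeasurableSet S₁)
    (hpos : 0 < (μ {p | p.1 ∈ Sstar}).toReal) (hpos₁ : 0 < (μ {p | p.1 ∈ S₁}).toReal)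
    (ε : ℝ) (hε : 0 < ε)
    (hclose : |(μ {p | p.1 ∈ S₁}).toReal - (μ {p | p.1 ∈ Sstar}).toReal| ≤ ε)
    (herr : errCond μ S₁ S₁ ≤ errCond μ Sstar Sstar + ε) :
    errD μ S₁ ≤ errD μ Sstar + 5 * ε := by
  rw [errCond_self_eq_cond hS₁, errCond_self_eq_cond hSstar] at herr
  calc errD μ S₁
      ≤ errD μ Sstar + 3 * ε := by
        rw [errD_eq_measureReal_compl_symmDiff hlab, errD_eq_measureReal_compl_symmDiff hlab]
        exact stmt13_general (measurable_snd (measurableSet_singleton 1)) (measurable_fst hSstar)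
          (measurable_fst hS₁) hpos hpos₁ hclose herr
    _ ≤ errD μ Sstar + 5 * ε := by linarith
end

section
/- Let S*, S₁ ⊆ ℝ^d be measurable sets with P_{(x,y)∼D}[x ∈ S*] > 0 and P_{(x,y)∼D}[x ∈ S₁] > 0, and let α ≥ 0, ε > 0. If P_{(x,y)∼D}[y = 0] ≥ P_{(x,y)∼D}[x ∈ S*], |P_{(x,y)∼D}[x ∈ S₁] − P_{(x,y)∼D}[x ∈ S*]| ≤ ε, and err_{D|S₁}(S₁) ≤ (1+α) · err_{D|S*}(S*), then err_D(S₁) ≤ (1+α) · (err_D(S*) + 3ε). -/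
open MeasureTheory

/-
Identify a classifier with the event `T` on which it predicts `1`, and let `Z` be the event that the
label is `0`. A prediction counts towards the loss when it agrees with the label, so the loss of `T`
is `μ (T ∆ Z) = 2 μ (T \ Z) + μ Z - μ T`, and its loss conditioned on `T` is the conditional
probability of `T \ Z`. Multiplying the conditional inequality by `μ T₁`, which is `μ T` up to `ε`,
gives `μ (T₁ \ Z) ≤ (1 + α) (μ (T \ Z) + ε)`. The case assumption makes `μ Z - μ T` nonnegative, so
it only grows when multiplied by `1 + α`.
-/

section ConditionalReduction

open ProbabilityTheory
open scoped symmDiff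

theorem mul_le_mul_add_abs_sub {R : Type*} [CommRing R] [LinearOrder R] [IsOrderedRing R] {p : R}
    (hp₀ : 0 ≤ p) (hp₁ : p ≤ 1) (a b : R) :
    p * b ≤ p * a + |b - a| :=
  calc
    p * b = p * a + p * (b - a) := by ring
    _ ≤ p * a + p * |b - a| := by gcongr; exact le_abs_self _
    _ ≤ p * a + |b - a| := by gcongr; exact mul_le_of_le_one_left (abs_nonneg _) hp₁

section Events

variable {Ω : Type*} [MeasurableSpace Ω] {μ : Measure Ω} [IsFiniteMeasure μ] {s t : Set Ω}

theorem measureReal_symmDiff_eq_two_mul_sdiff_add_sub (hs : MeasurableSet s)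
    (ht : MeasurableSet t) :
    μ.real (s ∆ t) = 2 * μ.real (s \ t) + μ.real t - μ.real s := by
  have hsymm := measureReal_symmDiff_eq (μ := μ) hs ht
  have hs_split := measureReal_inter_add_sdiff (μ := μ) (s := s) ht
  have ht_split := measureReal_inter_add_sdiff (μ := μ) (s := t) hs
  rw [Set.inter_comm] at ht_split
  linarith

theorem cond_real_mul_eq_inter (hs : MeasurableSet s) (t : Set Ω) :
    μ[|s].real t * μ.real s = μ.real (s ∩ t) := by
  simp only [measureReal_def, ← ENNReal.toReal_mul, cond_mul_eq_inter hs]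

theorem cond_real_symmDiff_mul_eq_sdiff (hs : MeasurableSet s) (t : Set Ω) :
    μ[|s].real (s ∆ t) * μ.real s = μ.real (s \ t) := by
  have hinter : s ∩ s ∆ t = s \ t := by grind
  rw [cond_real_mul_eq_inter hs, hinter]

theorem measureReal_sdiff_le_of_cond_symmDiff_le {T T₁ Z : Set Ω} {c ε : ℝ}
    (hT : MeasurableSet T) (hT₁ : MeasurableSet T₁) (hc : 0 ≤ c)
    (hclose : |μ.real T₁ - μ.real T| ≤ ε)
    (hcond : μ[|T₁].real (T₁ ∆ Z) ≤ c * μ[|T].real (T ∆ Z)) :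
    μ.real (T₁ \ Z) ≤ c * (μ.real (T \ Z) + ε) :=
  calc
    μ.real (T₁ \ Z) = μ[|T₁].real (T₁ ∆ Z) * μ.real T₁ :=
      (cond_real_symmDiff_mul_eq_sdiff hT₁ Z).symm
    _ ≤ c * μ[|T].real (T ∆ Z) * μ.real T₁ := by gcongr
    _ = c * (μ[|T].real (T ∆ Z) * μ.real T₁) := mul_assoc ..
    _ ≤ c * (μ[|T].real (T ∆ Z) * μ.real T + |μ.real T₁ - μ.real T|) := by
        gcongr; exact mul_le_mul_add_abs_sub measureReal_nonneg measureReal_le_one _ _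
    _ ≤ c * (μ.real (T \ Z) + ε) := by rw [cond_real_symmDiff_mul_eq_sdiff hT]; gcongr

theorem stmt14_general {T T₁ Z : Set Ω} {α ε : ℝ}
    (hT : MeasurableSet T) (hT₁ : MeasurableSet T₁) (hZ : MeasurableSet Z) (hα : 0 ≤ α)
    (hcase : μ.real T ≤ μ.real Z) (hclose : |μ.real T₁ - μ.real T| ≤ ε)
    (hcond : μ[|T₁].real (T₁ ∆ Z) ≤ (1 + α) * μ[|T].real (T ∆ Z)) :
    μ.real (T₁ ∆ Z) ≤ (1 + α) * (μ.real (T ∆ Z) + 3 * ε) := by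
  have hsdiff : μ.real (T₁ \ Z) ≤ (1 + α) * (μ.real (T \ Z) + ε) :=
    measureReal_sdiff_le_of_cond_symmDiff_le hT hT₁ (by positivity) hclose hcond
  have hε : 0 ≤ ε := (abs_nonneg _).trans hclose
  have hgap : 0 ≤ μ.real Z - μ.real T + ε := by linarith
  rw [measureReal_symmDiff_eq_two_mul_sdiff_add_sub hT₁ hZ,
    measureReal_symmDiff_eq_two_mul_sdiff_add_sub hT hZ]
  calc
    2 * μ.real (T₁ \ Z) + μ.real Z - μ.real T₁
      ≤ 2 * ((1 + α) * (μ.real (T \ Z) + ε)) + (μ.real Z - μ.real T + ε) := by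
        linarith [neg_le_of_abs_le hclose]
    _ ≤ 2 * ((1 + α) * (μ.real (T \ Z) + ε)) + (1 + α) * (μ.real Z - μ.real T + ε) := by
        gcongr; exact le_mul_of_one_le_left hgap (by linarith)
    _ = (1 + α) * (2 * μ.real (T \ Z) + μ.real Z - μ.real T + 3 * ε) := by ring

end Events

section Losses

variable {d : ℕ} {μ : Measure (EuclideanSpace ℝ (Fin d) × ℝ)}

theorem errD_eq_measureReal_symmDiff (hlab : ∀ᵐ p ∂μ, p.2 = 0 ∨ p.2 = 1)
    (S : Set (EuclideanSpace ℝ (Fin d))) :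
    errD μ S = μ.real ({p | p.1 ∈ S} ∆ {p | p.2 = 0}) := by
  refine measureReal_congr (Filter.eventuallyEq_set.mpr ?_)
  filter_upwards [hlab] with p hp
  by_cases hpS : p.1 ∈ S <;> rcases hp with hp | hp <;> simp [Set.mem_symmDiff, hp, hpS]

theorem errCond_eq_errD_cond {T : Set (EuclideanSpace ℝ (Fin d))} (hT : MeasurableSet T)
    (S : Set (EuclideanSpace ℝ (Fin d))) :
    errCond μ T S = errD μ[|{p | p.1 ∈ T}] S := by
  have hT' : MeasurableSet {p : EuclideanSpace ℝ (Fin d) × ℝ | p.1 ∈ T} := measurable_fst hT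
  rw [errCond, errD, cond_apply hT', ENNReal.toReal_mul, ENNReal.toReal_inv, div_eq_inv_mul,
    Set.inter_comm, Set.ofPred_and]

theorem errCond_eq_cond_real_symmDiff (hlab : ∀ᵐ p ∂μ, p.2 = 0 ∨ p.2 = 1)
    {T : Set (EuclideanSpace ℝ (Fin d))} (hT : MeasurableSet T)
    (S : Set (EuclideanSpace ℝ (Fin d))) :
    errCond μ T S = μ[|{p | p.1 ∈ T}].real ({p | p.1 ∈ S} ∆ {p | p.2 = 0}) := by
  rw [errCond_eq_errD_cond hT,
    errD_eq_measureReal_symmDiff (cond_absolutelyContinuous.ae_le hlab)]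

end Losses

end ConditionalReduction

/-- multiplicative reduction, Case I: `P[y=0] ≥ P[x ∈ S*]`: if
`|P[x ∈ S₁] − P[x ∈ S*]| ≤ ε` and `err_{D|S₁}(S₁) ≤ (1+α)·err_{D|S*}(S*)` then
`err_D(S₁) ≤ (1+α)·(err_D(S*) + 3ε)`. -/
theorem stmt14 (d : ℕ)
    (μ : Measure (EuclideanSpace ℝ (Fin d) × ℝ)) [IsProbabilityMeasure μ]
    (hlab : ∀ᵐ p ∂μ, p.2 = 0 ∨ p.2 = 1)
    (Sstar S₁ : Set (EuclideanSpace ℝ (Fin d)))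
    (hSstar : MeasurableSet Sstar) (hS₁ : MeasurableSet S₁)
    (hpos : 0 < (μ {p | p.1 ∈ Sstar}).toReal) (hpos₁ : 0 < (μ {p | p.1 ∈ S₁}).toReal)
    (α ε : ℝ) (hα : 0 ≤ α) (hε : 0 < ε)
    (hcase : (μ {p | p.1 ∈ Sstar}).toReal ≤ (μ {p | p.2 = 0}).toReal)
    (hclose : |(μ {p | p.1 ∈ S₁}).toReal - (μ {p | p.1 ∈ Sstar}).toReal| ≤ ε)
    (herr : errCond μ S₁ S₁ ≤ (1 + α) * errCond μ Sstar Sstar) :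
    errD μ S₁ ≤ (1 + α) * (errD μ Sstar + 3 * ε) := by
  rw [errCond_eq_cond_real_symmDiff hlab hS₁, errCond_eq_cond_real_symmDiff hlab hSstar] at herr
  rw [errD_eq_measureReal_symmDiff hlab, errD_eq_measureReal_symmDiff hlab]
  exact stmt14_general (measurable_fst hSstar) (measurable_fst hS₁)
    (measurable_snd (measurableSet_singleton 0)) hα hcase hclose herr
end
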